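/- Let H be an induced subgraph of a graph G with mr(F₂,H) = k and mr(F₂,G) > k. Let R be a set of edges in G−H (unordered pairs of distinct vertices of G−H), T a set of vertices of G−H, and suppose I_R ∪ I_T = MR(F₂,H). Let S be the set of all vertices incident to an edge of R. If G ∈ F_{k+1}(F₂,H), then |V(G)| − |V(H)| ≤ |S| + |T| ≤ 2|R| + |T|. -/

import Mathlib

/-!
If an induced subgraph `G[X]` contains `H = G[W]` together with all of `T` and all endpoints of
edges in `R`, then `mr(G[X]) > mr(H)`. Otherwise a minimum-rank matrix `A` of `G[X]` has the same
rank as its principal submatrix `M` on `W`, and `M ∈ MR(H)`. Over `F₂` the off-diagonal entries of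
`A` are determined by the graph, so the matrices that test whether a vertex of `T` or an edge of
`R` is rank-increasing with respect to `M` are submatrices of `A`; they have rank at most `rank M`,
so nothing in `R` or `T` is rank-increasing with respect to `M`. Applied to `X = V(G) - x`, this
shows that a vertex `x` of `G - H` with `mr(G - x) ≤ mr(H)` lies in `T` or on an edge of `R`.
-/

open Matrix

/-- `A` is a symmetric matrix over `F` whose off-diagonal nonzero pattern is
given by the graph `G` (diagonal entries are unconstrained). -/
def IsGraphMatrix (F : Type*) [Field F] {V : Type*} (G : SimpleGraph V)
    (A : Matrix V V F) : Prop :=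
  A.IsSymm ∧ ∀ i j : V, i ≠ j → (A i j ≠ 0 ↔ G.Adj i j)

/-- The minimum rank `mr(F, G)` of the graph `G` over the field `F`. -/
noncomputable def minRank (F : Type*) [Field F] {V : Type*} [Fintype V]
    (G : SimpleGraph V) : ℕ :=
  sInf {r : ℕ | ∃ A : Matrix V V F, IsGraphMatrix F G A ∧ A.rank = r}

/-- The graph `G - v` obtained from `G` by deleting the vertex `v`. -/
def deleteVert {V : Type*} (G : SimpleGraph V) (v : V) : SimpleGraph {u : V // u ≠ v} :=
  SimpleGraph.comap Subtype.val G

/-- The induced subgraph of `G` on a finite set `W` of vertices. -/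
def inducedSub {V : Type*} (G : SimpleGraph V) (W : Finset V) :
    SimpleGraph {x : V // x ∈ W} :=
  SimpleGraph.comap Subtype.val G

/-- `MR(F, G)`: the set of matrices in `S(F, G)` attaining the minimum rank of `G`. -/
noncomputable def MRSet (F : Type*) [Field F] {V : Type*} [Fintype V] (G : SimpleGraph V) :
    Set (Matrix V V F) :=
  {A | IsGraphMatrix F G A ∧ A.rank = minRank F G}

/-- The weight vector of a vertex `v` with respect to the induced subgraph on `W`:
its entry at `i ∈ W` is `1` iff `v` is adjacent to `i` in `G`. -/
def wtVec {V : Type*} (G : SimpleGraph V) [DecidableRel G.Adj] (W : Finset V) (v : V) :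
    {x : V // x ∈ W} → ZMod 2 :=
  fun i => if G.Adj v ↑i then 1 else 0

/-- The matrix `[M | w]`: `M` augmented by the extra column `w`. -/
def augmentCol {F : Type*} {n : Type*} (M : Matrix n n F) (w : n → F) :
    Matrix n (n ⊕ Unit) F :=
  Matrix.of fun i => Sum.elim (fun j => M i j) (fun _ => w i)

/-- The bordered matrix `[[M, u], [vᵀ, c]]`. -/
def borderMat {F : Type*} {n : Type*} (M : Matrix n n F) (u v : n → F) (c : F) :
    Matrix (n ⊕ Unit) (n ⊕ Unit) F :=
  Matrix.of (Sum.elim (fun i => Sum.elim (fun j => M i j) (fun _ => u i))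
                      (fun _ => Sum.elim (fun j => v j) (fun _ => c)))

section MinRank

variable {F : Type*} [Field F] {U V : Type*} {G : SimpleGraph V} {A : Matrix V V F}

variable (F G) in
theorem isGraphMatrix_adjMatrix [DecidableRel G.Adj] : IsGraphMatrix F G (G.adjMatrix F) :=
  ⟨G.isSymm_adjMatrix, fun i j _ => by simp [SimpleGraph.adjMatrix_apply]⟩

theorem IsGraphMatrix.submatrix (hA : IsGraphMatrix F G A) {f : U → V}
    (hf : Function.Injective f) : IsGraphMatrix F (G.comap f) (A.submatrix f f) :=
  ⟨hA.1.submatrix f, fun i j hij => hA.2 (f i) (f j) (hf.ne hij)⟩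

theorem IsGraphMatrix.minRank_le_rank [Fintype V] (hA : IsGraphMatrix F G A) :
    minRank F G ≤ A.rank :=
  Nat.sInf_le ⟨A, hA, rfl⟩

variable (F G) in
theorem mrSet_nonempty [Fintype V] : (MRSet F G).Nonempty := by
  classical
  exact Nat.sInf_mem (s := {r | ∃ A : Matrix V V F, IsGraphMatrix F G A ∧ A.rank = r})
    ⟨_, G.adjMatrix F, isGraphMatrix_adjMatrix F G, rfl⟩

end MinRank

section BorderedSubmatrix

variable {R l m n : Type*} [CommSemiring R] [StrongRankCondition R] [Fintype m] [Fintype n]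

theorem rank_augmentCol_submatrix_le (A : Matrix l m R) (r : n → l) (c : n → m) (b : m) :
    (augmentCol (A.submatrix r c) fun i => A (r i) b).rank ≤ A.rank := by
  have hsub : (augmentCol (A.submatrix r c) fun i => A (r i) b) =
      A.submatrix r (Sum.elim c fun _ => b) := by
    ext i (j | j) <;> rfl
  exact hsub ▸ A.rank_submatrix_le _ _

theorem rank_borderMat_submatrix_le (A : Matrix l m R) (r : n → l) (c : n → m) (a : l) (b : m) :
    (borderMat (A.submatrix r c) (fun i => A (r i) b) (fun j => A a (c j)) (A a b)).rank ≤
      A.rank := by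
  have hsub : borderMat (A.submatrix r c) (fun i => A (r i) b) (fun j => A a (c j)) (A a b) =
      A.submatrix (Sum.elim r fun _ => a) (Sum.elim c fun _ => b) := by
    ext (i | i) (j | j) <;> rfl
  exact hsub ▸ A.rank_submatrix_le _ _

end BorderedSubmatrix

section RankIncreasing

variable {V : Type*} (G : SimpleGraph V) [DecidableRel G.Adj] (W : Finset V)

/-- The vertex `v` of `G - G[W]` is rank-increasing with respect to `M`; the set `I_T` consists of
the `M ∈ MR(F₂, G[W])` for which some `v ∈ T` has this property. -/
def IsRankIncreasingVertex (M : Matrix {x // x ∈ W} {x // x ∈ W} (ZMod 2)) (v : V) : Prop :=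
  M.rank < (augmentCol M (wtVec G W v)).rank

/-- The pair `e` of vertices of `G - G[W]`, adjacent in `G` or not, is a rank-increasing edge with
respect to `M`; the set `I_R` consists of the `M ∈ MR(F₂, G[W])` for which some `e ∈ R` has this
property. The existential picks an order of the endpoints of `e`; for symmetric `M` the choice does
not affect the rank. -/
def IsRankIncreasingEdge (M : Matrix {x // x ∈ W} {x // x ∈ W} (ZMod 2)) (e : Sym2 V) : Prop :=
  ∃ u v : V, e = s(u, v) ∧
    M.rank < (borderMat M (wtVec G W u) (wtVec G W v) (if G.Adj u v then 1 else 0)).rank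

end RankIncreasing

section InducedSubgraph

variable {V : Type*} {G : SimpleGraph V} [DecidableRel G.Adj]

theorem IsGraphMatrix.apply_eq_ite {A : Matrix V V (ZMod 2)} (hA : IsGraphMatrix (ZMod 2) G A)
    {i j : V} (hij : i ≠ j) : A i j = if G.Adj i j then 1 else 0 := by
  have eq_one_of_ne_zero : ∀ a : ZMod 2, a ≠ 0 → a = 1 := by decide
  split_ifs with hadj
  · exact eq_one_of_ne_zero _ ((hA.2 i j hij).2 hadj)
  · exact not_not.1 (mt (hA.2 i j hij).1 hadj)

variable {W : Finset V} {X : Set V} {A : Matrix X X (ZMod 2)}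

theorem IsGraphMatrix.wtVec_eq_apply (hA : IsGraphMatrix (ZMod 2) (G.induce X) A)
    (hWX : ∀ w ∈ W, w ∈ X) {v : X} (hv : (v : V) ∉ W) :
    wtVec G W v = fun i => A (Subtype.map id hWX i) v := by
  funext i
  have hvi : v ≠ Subtype.map id hWX i := fun h => hv (h ▸ i.2)
  rw [← hA.1.apply, hA.apply_eq_ite hvi]
  rfl

variable [Fintype X]

theorem IsGraphMatrix.rank_augmentCol_wtVec_le (hA : IsGraphMatrix (ZMod 2) (G.induce X) A)
    (hWX : ∀ w ∈ W, w ∈ X) {v : X} (hv : (v : V) ∉ W) :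
    (augmentCol (A.submatrix (Subtype.map id hWX) (Subtype.map id hWX)) (wtVec G W v)).rank ≤
      A.rank := by
  rw [hA.wtVec_eq_apply hWX hv]
  exact rank_augmentCol_submatrix_le A _ _ v

theorem IsGraphMatrix.rank_borderMat_wtVec_le (hA : IsGraphMatrix (ZMod 2) (G.induce X) A)
    (hWX : ∀ w ∈ W, w ∈ X) {u v : X} (huv : u ≠ v) (hu : (u : V) ∉ W) (hv : (v : V) ∉ W) :
    (borderMat (A.submatrix (Subtype.map id hWX) (Subtype.map id hWX)) (wtVec G W u) (wtVec G W v)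
      (if G.Adj u v then 1 else 0)).rank ≤ A.rank := by
  have hwt : wtVec G W v = fun j => A v (Subtype.map id hWX j) := by
    simpa only [hA.1.apply] using hA.wtVec_eq_apply hWX hv
  have hcorner : (if G.Adj u v then 1 else 0) = A v u := by
    rw [← hA.1.apply, hA.apply_eq_ite huv]
    rfl
  rw [hA.wtVec_eq_apply hWX hu, hwt, hcorner]
  exact rank_borderMat_submatrix_le A _ _ v u

theorem minRank_inducedSub_lt_minRank_induce_of_cover {R : Set (Sym2 V)} {T : Set V}
    (hWX : ∀ w ∈ W, w ∈ X) (hR : ∀ e ∈ R, ¬ e.IsDiag ∧ ∀ x ∈ e, x ∈ X \ W)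
    (hT : ∀ v ∈ T, v ∈ X \ W)
    (hcover : ∀ M ∈ MRSet (ZMod 2) (inducedSub G W),
      (∃ e ∈ R, IsRankIncreasingEdge G W M e) ∨ ∃ v ∈ T, IsRankIncreasingVertex G W M v) :
    minRank (ZMod 2) (inducedSub G W) < minRank (ZMod 2) (G.induce X) := by
  by_contra! hle
  obtain ⟨A, hA, hArank⟩ := mrSet_nonempty (ZMod 2) (G.induce X)
  let M := A.submatrix (Subtype.map id hWX) (Subtype.map id hWX)
  have hM : IsGraphMatrix (ZMod 2) (inducedSub G W) M :=
    hA.submatrix (Subtype.map_injective hWX Function.injective_id)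
  have hMA : M.rank ≤ A.rank := A.rank_submatrix_le _ _
  have hAH : A.rank ≤ minRank (ZMod 2) (inducedSub G W) := hArank.trans_le hle
  have hHM : minRank (ZMod 2) (inducedSub G W) ≤ M.rank := hM.minRank_le_rank
  have hMmem : M ∈ MRSet (ZMod 2) (inducedSub G W) := ⟨hM, (hMA.trans hAH).antisymm hHM⟩
  rcases hcover M hMmem with ⟨_, he, u, v, rfl, hinc⟩ | ⟨v, hv, hinc⟩
  · obtain ⟨hdiag, hends⟩ := hR _ he
    obtain ⟨huX, huW⟩ := hends u (Sym2.mem_mk_left u v)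
    obtain ⟨hvX, hvW⟩ := hends v (Sym2.mem_mk_right u v)
    have huv : (⟨u, huX⟩ : X) ≠ ⟨v, hvX⟩ := fun h =>
      hdiag (Sym2.mk_isDiag_iff.2 (congrArg Subtype.val h))
    exact hinc.not_ge ((hA.rank_borderMat_wtVec_le hWX huv huW hvW).trans (hAH.trans hHM))
  · obtain ⟨hvX, hvW⟩ := hT v hv
    exact hinc.not_ge
      ((hA.rank_augmentCol_wtVec_le hWX (v := ⟨v, hvX⟩) hvW).trans (hAH.trans hHM))

end InducedSubgraph

theorem ncard_setOf_exists_mem_sym2_le {V : Type*} {E : Set (Sym2 V)} (hE : E.Finite) :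
    {x : V | ∃ e ∈ E, x ∈ e}.ncard ≤ 2 * E.ncard := by
  classical
  lift E to Finset (Sym2 V) using hE
  have hunion : {x : V | ∃ e ∈ (E : Set (Sym2 V)), x ∈ e} =
      (E.biUnion Sym2.toFinset : Finset V) := by
    ext x
    simp [Sym2.mem_toFinset]
  rw [hunion, Set.ncard_coe_finset, Set.ncard_coe_finset, mul_comm]
  refine Finset.card_biUnion_le_card_mul _ _ _ fun e _ => ?_
  rw [Sym2.card_toFinset]
  split_ifs <;> omega

/-- Let `H = G[W]` be an induced subgraph of `G` with `mr(F₂, H) = k` and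
`mr(F₂, G) > k`.  Let `R` be a set of edges of `G - H` (unordered pairs of distinct
vertices outside `W`) and `T` a set of vertices of `G - H` such that
`I_R ∪ I_T = MR(F₂, H)` (every `M ∈ MR(F₂, H)` has a rank-increasing edge in `R` or a
rank-increasing vertex in `T`).  Let `S` be the set of vertices incident to an edge of
`R`.  If `G ∈ F_{k+1}(F₂, H)` (witnessed by this copy of `H`), then
`|V(G)| - |V(H)| ≤ |S| + |T| ≤ 2|R| + |T|`. -/
theorem card_bound_of_cover {V : Type*} [Fintype V] [DecidableEq V]
    (G : SimpleGraph V) [DecidableRel G.Adj] (W : Finset V) (k : ℕ)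
    (hH : minRank (ZMod 2) (inducedSub G W) = k)
    (hGgt : k < minRank (ZMod 2) G)
    (R : Set (Sym2 V)) (T : Set V)
    (hR : ∀ e ∈ R, ¬ e.IsDiag ∧ ∀ x ∈ e, x ∉ W)
    (hT : ∀ v ∈ T, v ∉ W)
    (hcover : ∀ M ∈ MRSet (ZMod 2) (inducedSub G W),
      (∃ e ∈ R, ∃ u v : V, e = s(u, v) ∧
        M.rank < (borderMat M (wtVec G W u) (wtVec G W v)
          (if G.Adj u v then 1 else 0)).rank) ∨
      (∃ v ∈ T, M.rank < (augmentCol M (wtVec G W v)).rank))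
    (hG : k + 1 ≤ minRank (ZMod 2) G)
    (hdel : ∀ v : V, v ∉ W → minRank (ZMod 2) (deleteVert G v) ≤ k) :
    Wᶜ.card ≤ {x : V | ∃ e ∈ R, x ∈ e}.ncard + T.ncard ∧
      {x : V | ∃ e ∈ R, x ∈ e}.ncard + T.ncard ≤ 2 * R.ncard + T.ncard := by
  refine ⟨?_, Nat.add_le_add_right (ncard_setOf_exists_mem_sym2_le R.toFinite) _⟩
  suffices hsub : ((Wᶜ : Finset V) : Set V) ⊆ {x : V | ∃ e ∈ R, x ∈ e} ∪ T by
    rw [← Set.ncard_coe_finset]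
    exact (Set.ncard_le_ncard hsub).trans (Set.ncard_union_le _ _)
  intro x hx
  have hxW : x ∉ W := by simpa using hx
  by_contra hxST
  have hxS : ∀ e ∈ R, x ∉ e := fun e he hxe => hxST (Or.inl ⟨e, he, hxe⟩)
  have hxT : x ∉ T := fun h => hxST (Or.inr h)
  have hlt : minRank (ZMod 2) (inducedSub G W) < minRank (ZMod 2) (deleteVert G x) :=
    minRank_inducedSub_lt_minRank_induce_of_cover (X := {u | u ≠ x})
      (fun _ hw => ne_of_mem_of_not_mem hw hxW)
      (fun e he => ⟨(hR e he).1, fun _ hu =>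
        ⟨ne_of_mem_of_not_mem hu (hxS e he), (hR e he).2 _ hu⟩⟩)
      (fun v hv => ⟨ne_of_mem_of_not_mem hv hxT, hT v hv⟩) hcover
  exact (hH ▸ hlt).not_ge (hdel x hxW)
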